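/- Let y(k) = C A^k x0 be the nominal output from an arbitrary initial state x0 ∈ ℝ^n. For every T0 ≥ ν + μ − 1, the choice N0 = ν attains the Hankel information bound: Rank(Y_{ν,T0}) = Γ({y(k)}), where ν and μ are the observability and excitability indices. -/

import Mathlib

open Matrix

noncomputable section

/-- The observability matrix `O_N = [C; CA; …; CA^{N-1}]`, with block rows indexed by `Fin N`. -/
def obsMat {n p : ℕ} (A : Matrix (Fin n) (Fin n) ℝ) (C : Matrix (Fin p) (Fin n) ℝ)
    (N : ℕ) : Matrix (Fin N × Fin p) (Fin n) ℝ :=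
  fun ir j => (C * A ^ (ir.1 : ℕ)) ir.2 j

/-- The observability index `ν = min {N : Rank O_N = Rank O_{N+j} for all j}`. -/
def obsIndex {n p : ℕ} (A : Matrix (Fin n) (Fin n) ℝ) (C : Matrix (Fin p) (Fin n) ℝ) : ℕ :=
  sInf {N : ℕ | ∀ j : ℕ, (obsMat A C (N + j)).rank = (obsMat A C N).rank}

/-- The Krylov/excitability matrix `E_N(x) = [x, Ax, …, A^{N-1} x]`. -/
def excMat {n : ℕ} (A : Matrix (Fin n) (Fin n) ℝ) (x : Fin n → ℝ) (N : ℕ) :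
    Matrix (Fin n) (Fin N) ℝ :=
  fun i k => (A ^ (k : ℕ)).mulVec x i

/-- The excitability index at `x`: `μ(x) = min {i : Rank E_i(x) = Rank E_{i+j}(x) for all j}`. -/
def excIndexAt {n : ℕ} (A : Matrix (Fin n) (Fin n) ℝ) (x : Fin n → ℝ) : ℕ :=
  sInf {i : ℕ | ∀ j : ℕ, (excMat A x (i + j)).rank = (excMat A x i).rank}

/-- The excitability index `μ = max_{x ∈ ℝⁿ} μ(x)`. -/
def excIndex {n : ℕ} (A : Matrix (Fin n) (Fin n) ℝ) : ℕ :=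
  sSup (Set.range (excIndexAt A))

/-- The Hankel matrix `Y_{N,T}` of the nominal output `y(k) = C A^k x0`; its `j`-th column is
the stacked vector `(y(j), …, y(j+N-1))`. -/
def hankelMat {n p : ℕ} (A : Matrix (Fin n) (Fin n) ℝ) (C : Matrix (Fin p) (Fin n) ℝ)
    (x0 : Fin n → ℝ) (N T : ℕ) : Matrix (Fin N × Fin p) (Fin (T - N + 1)) ℝ :=
  fun ir j => (C * A ^ ((j : ℕ) + (ir.1 : ℕ))).mulVec x0 ir.2

/-- The Hankel information `Γ({y(k)}) = sup {Rank Y_{N,T} : N ≤ T}`. -/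
def hankelInfo {n p : ℕ} (A : Matrix (Fin n) (Fin n) ℝ) (C : Matrix (Fin p) (Fin n) ℝ)
    (x0 : Fin n → ℝ) : ℕ :=
  sSup {r : ℕ | ∃ N T : ℕ, N ≤ T ∧ r = (hankelMat A C x0 N T).rank}

/-!
`Y_{N,T} = O_N E_{T-N+1}(x0)`, so its rank depends only on, and is monotone in, the row space of
`O_N` and the column space of `E_{T-N+1}(x0)`. Each of the two spaces grows with its index and,
once its dimension is stationary, is itself stationary: this happens at `ν` for the rows and at
`μ(x0)` for the columns. Hence the rank is maximal as soon as `N = ν` and `T - N + 1 ≥ μ(x0)`. By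
Cayley–Hamilton `μ(x) ≤ n` for every `x`, so `μ` is the maximum of a bounded set and `μ(x0) ≤ μ`.
-/

section RankMul

variable {R K l m m' n n' : Type*} [Fintype m] [Fintype n]

lemma rank_mul_le_of_range_le [CommSemiring R] [StrongRankCondition R] [Fintype n']
    (B : Matrix l m R) {M : Matrix m n R} {M' : Matrix m n' R}
    (h : LinearMap.range M.mulVecLin ≤ LinearMap.range M'.mulVecLin) :
    (B * M).rank ≤ (B * M').rank := by
  have hmap : LinearMap.range (B * M).mulVecLin ≤ LinearMap.range (B * M').mulVecLin := by
    simpa only [Matrix.mulVecLin_mul, LinearMap.range_comp] using Submodule.map_mono h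
  exact Submodule.finrank_mono hmap

lemma rank_mul_le_of_range_transpose_le [Field K] [Fintype l] [Fintype m'] {M : Matrix l m K}
    {M' : Matrix m' m K} (B : Matrix m n K)
    (h : LinearMap.range Mᵀ.mulVecLin ≤ LinearMap.range M'ᵀ.mulVecLin) :
    (M * B).rank ≤ (M' * B).rank := by
  simpa only [← Matrix.transpose_mul, Matrix.rank_transpose] using rank_mul_le_of_range_le Bᵀ h

end RankMul

lemma sInf_finrank_stable_eq_monotonicSequenceLimitIndex {K V : Type*} [DivisionRing K]
    [AddCommGroup V] [Module K V] [FiniteDimensional K V] (F : ℕ →o Submodule K V) :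
    sInf {N : ℕ | ∀ j : ℕ, Module.finrank K (F (N + j)) = Module.finrank K (F N)} =
      monotonicSequenceLimitIndex F := by
  refine congrArg sInf (Set.ext fun N ↦ ⟨fun h m hm ↦ ?_, fun h j ↦ ?_⟩)
  · obtain ⟨j, rfl⟩ := Nat.exists_eq_add_of_le hm
    exact Submodule.eq_of_le_of_finrank_eq (F.monotone hm) (h j).symm
  · rw [← h (N + j) (Nat.le_add_right N j)]

lemma pow_mem_span_pow_lt_natDegree {R S : Type*} [CommRing R] [Semiring S] [Algebra R S] {a : S}
    {f : Polynomial R} (hf : f.Monic) (hfa : Polynomial.aeval a f = 0) (k : ℕ) :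
    a ^ k ∈ Submodule.span R ((a ^ ·) '' Set.Iio f.natDegree) := by
  classical
  rw [← Finset.coe_range, ← Finset.coe_image, Submodule.span_range_natDegree_eq_adjoin hf hfa]
  exact pow_mem (Algebra.self_mem_adjoin_singleton R a) k

section StateSpace

variable {R ι κ : Type*} [Fintype ι] [DecidableEq ι]

/-- The increasing sequence of Krylov subspaces `span {x, Ax, …, A^{N-1} x}`. -/
def krylovSpace [CommSemiring R] (A : Matrix ι ι R) (x : ι → R) : ℕ →o Submodule R (ι → R) where
  toFun N := Submodule.span R ((fun k ↦ A ^ k *ᵥ x) '' Set.Iio N)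
  monotone' _ _ h := Submodule.span_mono (Set.image_mono (Set.Iio_subset_Iio h))

/-- The increasing sequence of spaces spanned by the rows of `C, CA, …, CA^{N-1}`; its `N`-th term
is the row space of the observability matrix `O_N`. -/
def obsRowSpace [CommSemiring R] (A : Matrix ι ι R) (C : Matrix κ ι R) :
    ℕ →o Submodule R (ι → R) where
  toFun N := Submodule.span R (⋃ k ∈ Set.Iio N, Set.range (C * A ^ k).row)
  monotone' _ _ h := Submodule.span_mono (Set.biUnion_subset_biUnion_left (Set.Iio_subset_Iio h))

lemma krylovSpace_le_krylovSpace_card [CommRing R] [Nontrivial R] (A : Matrix ι ι R) (x : ι → R)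
    (N : ℕ) : krylovSpace A x N ≤ krylovSpace A x (Fintype.card ι) := by
  refine Submodule.span_le.2 ?_
  rintro _ ⟨k, -, rfl⟩
  have hpow : A ^ k ∈ Submodule.span R ((A ^ ·) '' Set.Iio (Fintype.card ι)) := by
    rw [← A.charpoly_natDegree_eq_dim]
    exact pow_mem_span_pow_lt_natDegree A.charpoly_monic A.aeval_self_charpoly k
  have hmap := Submodule.mem_map_of_mem (f := (Matrix.mulVecBilin R R).flip x) hpow
  rwa [Submodule.map_span, Set.image_image] at hmap

end StateSpace

section Indices

variable {n p : ℕ} (A : Matrix (Fin n) (Fin n) ℝ) (C : Matrix (Fin p) (Fin n) ℝ)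
  (x : Fin n → ℝ)

lemma range_mulVecLin_excMat (N : ℕ) :
    LinearMap.range (excMat A x N).mulVecLin = krylovSpace A x N := by
  rw [Matrix.range_mulVecLin]
  refine congrArg (Submodule.span ℝ) (Set.ext fun v ↦ ⟨?_, ?_⟩)
  · rintro ⟨k, rfl⟩
    exact ⟨k, k.isLt, rfl⟩
  · rintro ⟨k, hk, rfl⟩
    exact ⟨⟨k, hk⟩, rfl⟩

lemma range_mulVecLin_transpose_obsMat (N : ℕ) :
    LinearMap.range (obsMat A C N)ᵀ.mulVecLin = obsRowSpace A C N := by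
  rw [Matrix.range_mulVecLin]
  refine congrArg (Submodule.span ℝ) (Set.ext fun v ↦ ⟨?_, fun hv ↦ ?_⟩)
  · rintro ⟨⟨k, r⟩, rfl⟩
    exact Set.mem_biUnion (Set.mem_Iio.2 k.isLt) ⟨r, rfl⟩
  · obtain ⟨k, hk, r, rfl⟩ := Set.mem_iUnion₂.1 hv
    exact ⟨(⟨k, hk⟩, r), rfl⟩

lemma rank_excMat (N : ℕ) : (excMat A x N).rank = Module.finrank ℝ (krylovSpace A x N) := by
  rw [Matrix.rank, range_mulVecLin_excMat]

lemma rank_obsMat (N : ℕ) : (obsMat A C N).rank = Module.finrank ℝ (obsRowSpace A C N) := by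
  rw [← Matrix.rank_transpose, Matrix.rank, range_mulVecLin_transpose_obsMat]

lemma excIndexAt_eq_monotonicSequenceLimitIndex :
    excIndexAt A x = monotonicSequenceLimitIndex (krylovSpace A x) := by
  simp only [excIndexAt, rank_excMat, sInf_finrank_stable_eq_monotonicSequenceLimitIndex]

lemma obsIndex_eq_monotonicSequenceLimitIndex :
    obsIndex A C = monotonicSequenceLimitIndex (obsRowSpace A C) := by
  simp only [obsIndex, rank_obsMat, sInf_finrank_stable_eq_monotonicSequenceLimitIndex]

lemma krylovSpace_le_of_excIndexAt_le {M : ℕ} (hM : excIndexAt A x ≤ M) (N : ℕ) :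
    krylovSpace A x N ≤ krylovSpace A x M := by
  rw [excIndexAt_eq_monotonicSequenceLimitIndex] at hM
  exact (le_monotonicSequenceLimit _ N).trans ((krylovSpace A x).monotone hM)

lemma obsRowSpace_le_obsRowSpace_obsIndex (N : ℕ) :
    obsRowSpace A C N ≤ obsRowSpace A C (obsIndex A C) := by
  rw [obsIndex_eq_monotonicSequenceLimitIndex]
  exact le_monotonicSequenceLimit _ N

lemma excIndexAt_le_dim : excIndexAt A x ≤ n := by
  rw [excIndexAt_eq_monotonicSequenceLimitIndex]
  refine Nat.sInf_le fun m hm ↦ ((krylovSpace A x).monotone hm).antisymm ?_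
  simpa only [Fintype.card_fin] using krylovSpace_le_krylovSpace_card A x m

lemma excIndexAt_le_excIndex : excIndexAt A x ≤ excIndex A :=
  le_csSup ⟨n, Set.forall_mem_range.2 (excIndexAt_le_dim A)⟩ (Set.mem_range_self x)

lemma hankelMat_eq_obsMat_mul_excMat (N T : ℕ) :
    hankelMat A C x N T = obsMat A C N * excMat A x (T - N + 1) := by
  ext ⟨i, r⟩ j
  calc ((C * A ^ ((j : ℕ) + i)) *ᵥ x) r
      = ((C * A ^ (i : ℕ)) *ᵥ (A ^ (j : ℕ) *ᵥ x)) r := by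
        rw [Matrix.mulVec_mulVec, Matrix.mul_assoc, ← pow_add, add_comm]
    _ = (obsMat A C N * excMat A x (T - N + 1)) (i, r) j := rfl

lemma rank_obsMat_mul_excMat_le {M : ℕ} (hM : excIndexAt A x ≤ M) (N L : ℕ) :
    (obsMat A C N * excMat A x L).rank ≤ (obsMat A C (obsIndex A C) * excMat A x M).rank :=
  calc (obsMat A C N * excMat A x L).rank
      ≤ (obsMat A C (obsIndex A C) * excMat A x L).rank :=
        rank_mul_le_of_range_transpose_le _ <| by
          simpa only [range_mulVecLin_transpose_obsMat] using
            obsRowSpace_le_obsRowSpace_obsIndex A C N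
    _ ≤ (obsMat A C (obsIndex A C) * excMat A x M).rank :=
        rank_mul_le_of_range_le _ <| by
          simpa only [range_mulVecLin_excMat] using krylovSpace_le_of_excIndexAt_le A x hM L

lemma hankelInfo_eq_rank_obsMat_mul_excMat {d : ℕ} (hd : excIndexAt A x ≤ d + 1) :
    hankelInfo A C x = (obsMat A C (obsIndex A C) * excMat A x (d + 1)).rank := by
  refine IsGreatest.csSup_eq ⟨⟨obsIndex A C, obsIndex A C + d, Nat.le_add_right _ _, ?_⟩, ?_⟩
  · rw [hankelMat_eq_obsMat_mul_excMat, Nat.add_sub_cancel_left]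
  · rintro _ ⟨N, T, -, rfl⟩
    rw [hankelMat_eq_obsMat_mul_excMat]
    exact rank_obsMat_mul_excMat_le A C x hd N (T - N + 1)

end Indices

-- If `μ(x0) = 0`, then `T0 = ν - 1` is allowed and `Y_{ν,T0}` has one column because of truncated
-- subtraction; that column is zero, as `x0 = 0`.
theorem obsIndex_attains_hankelInfo_general {n p : ℕ}
    (A : Matrix (Fin n) (Fin n) ℝ) (C : Matrix (Fin p) (Fin n) ℝ) (x0 : Fin n → ℝ)
    (T0 : ℕ) (hT0 : obsIndex A C + excIndexAt A x0 - 1 ≤ T0) :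
    (hankelMat A C x0 (obsIndex A C) T0).rank = hankelInfo A C x0 := by
  have hcols : excIndexAt A x0 ≤ T0 - obsIndex A C + 1 := by omega
  rw [hankelMat_eq_obsMat_mul_excMat, hankelInfo_eq_rank_obsMat_mul_excMat A C x0 hcols]

/-- For every initial state `x0` and every `T0 ≥ ν + μ − 1`, the choice `N0 = ν` attains
the Hankel information bound: `Rank Y_{ν,T0} = Γ({y(k)})`. -/
theorem obsIndex_attains_hankelInfo {n p : ℕ}
    (A : Matrix (Fin n) (Fin n) ℝ) (C : Matrix (Fin p) (Fin n) ℝ) (x0 : Fin n → ℝ)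
    (T0 : ℕ) (hT0 : obsIndex A C + excIndex A - 1 ≤ T0) :
    (hankelMat A C x0 (obsIndex A C) T0).rank = hankelInfo A C x0 :=
  obsIndex_attains_hankelInfo_general A C x0 T0 <|
    (Nat.sub_le_sub_right (Nat.add_le_add_left (excIndexAt_le_excIndex A x0) _) 1).trans hT0
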